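/- arXiv:2302.13901 — 2 statements merged into one kernel-verified Lean document; each statement's English description precedes it below -/
import Mathlib

section
/- Let 0 ≤ d < 4/5. Then ∫₀¹∫₀¹ x^{3-3d} y^{1-d} (1-xy)^{-d} · ₂F₁(1,d;2-d;x) · ₂F₁(1,d;2-d;y) dx dy = [Γ(1-d)/(2(4-5d))]·[Γ(1-d)/Γ(2-2d)]·₃F₂(2-2d,1,2d-1;3-2d,2-d;1) − [Γ(1-d)/(2(4-5d))]·(Γ(3-3d)/Γ(4-4d) − Γ(1-d)/Γ(2-2d))·₃F₂(2-2d,1,d;3-2d,2-d;1) − [Γ(1-d)/(2(4-5d))]·[Γ(3-3d)/Γ(4-4d)]·₄F₃(1,d,2-2d,3-3d;2-d,3-2d,4-4d;1). -/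
open Real MeasureTheory

/-- Pochhammer symbol `(a)_k = a (a+1) ⋯ (a+k-1)` for real `a`. -/
noncomputable def poch (a : ℝ) (k : ℕ) : ℝ := (ascPochhammer ℝ k).eval a

/-- Gaussian hypergeometric function `₂F₁(a,b;c;z)`. -/
noncomputable def hyp2F1 (a b c z : ℝ) : ℝ :=
  ∑' k : ℕ, (poch a k * poch b k) / poch c k * z ^ k / (Nat.factorial k)

/-- Generalized hypergeometric function `₃F₂(a₁,a₂,a₃;b₁,b₂;z)`. -/
noncomputable def hyp3F2 (a₁ a₂ a₃ b₁ b₂ z : ℝ) : ℝ :=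
  ∑' k : ℕ, (poch a₁ k * poch a₂ k * poch a₃ k) / (poch b₁ k * poch b₂ k) * z ^ k /
    (Nat.factorial k)

/-- Generalized hypergeometric function `₄F₃(a₁,a₂,a₃,a₄;b₁,b₂,b₃;z)`. -/
noncomputable def hyp4F3 (a₁ a₂ a₃ a₄ b₁ b₂ b₃ z : ℝ) : ℝ :=
  ∑' k : ℕ, (poch a₁ k * poch a₂ k * poch a₃ k * poch a₄ k) /
    (poch b₁ k * poch b₂ k * poch b₃ k) * z ^ k / (Nat.factorial k)


open Filter Topology

noncomputable def uu (p q : ℝ) (k : ℕ) : ℝ := poch p k / poch q k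

noncomputable def SS (p q c : ℝ) : ℝ := ∑' k : ℕ, uu p q k / (k + c)

lemma poch_zero (a : ℝ) : poch a 0 = 1 := by simp [poch]

lemma poch_succ (a : ℝ) (k : ℕ) : poch a (k + 1) = poch a k * (a + k) := by
  simp [poch, ascPochhammer_succ_eval]

lemma poch_pos {a : ℝ} (ha : 0 < a) (k : ℕ) : 0 < poch a k := ascPochhammer_pos k a ha

lemma poch_one (k : ℕ) : poch 1 k = (Nat.factorial k : ℝ) := by
  simp [poch]

lemma uu_zero (p q : ℝ) : uu p q 0 = 1 := by simp [uu, poch_zero]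

lemma uu_succ {p q : ℝ} (hq : 0 < q) (k : ℕ) :
    uu p q (k + 1) * (k + q) = uu p q k * (k + p) := by
  have h1 := (poch_pos hq k).ne'
  have h2 : (q + k : ℝ) ≠ 0 := by positivity
  unfold uu
  rw [poch_succ, poch_succ]
  field_simp
  ring

lemma uu_nonneg {p q : ℝ} (hp : 0 ≤ p) (hq : 0 < q) (k : ℕ) : 0 ≤ uu p q k := by
  induction k with
  | zero => simp [uu_zero]
  | succ k ih =>
    have h := uu_succ (p := p) hq k
    have h2 : (0:ℝ) < k + q := by positivity
    have : uu p q (k+1) = uu p q k * (k + p) / (k + q) := by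
      rw [← h]; field_simp
    rw [this]; positivity

lemma uu_sub {p q : ℝ} (hq : 0 < q) (k : ℕ) :
    uu p q k - uu p q (k + 1) = (q - p) * (uu p q k / (k + q)) := by
  have h := uu_succ (p := p) hq k
  have h2 : (0:ℝ) < k + q := by positivity
  have : uu p q (k+1) = uu p q k * (k + p) / (k + q) := by
    rw [← h]; field_simp
  rw [this]; field_simp; ring

lemma uu_le_one {p q : ℝ} (hp : 0 ≤ p) (hq : 0 < q) (hpq : p ≤ q) (k : ℕ) : uu p q k ≤ 1 := by
  induction k with
  | zero => simp [uu_zero]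
  | succ k ih =>
    have h := uu_sub (p := p) hq k
    have h1 := uu_nonneg hp hq k
    have : 0 ≤ (q - p) * (uu p q k / (k + q)) := by
      apply mul_nonneg (by linarith); positivity
    linarith

/-- change of shift for summability -/
lemma summable_shift {a : ℕ → ℝ} {c c' : ℝ} (hc : 0 < c) (hc' : 0 < c')
    (h : Summable fun k : ℕ => a k / (k + c)) : Summable fun k : ℕ => a k / (k + c') := by
  have := h.norm.mul_left (1 + c / c')
  refine Summable.of_norm_bounded this fun k => ?_
  have h1 : (0:ℝ) < k + c := by positivity
  have h2 : (0:ℝ) < k + c' := by positivity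
  rw [norm_div, norm_div, Real.norm_of_nonneg h1.le, Real.norm_of_nonneg h2.le,
    ← mul_div_assoc, div_le_div_iff₀ h2 h1]
  have h3 : (k + c) ≤ (1 + c / c') * (k + c') := by
    have : (1 + c / c') * (k + c') = k + c' + c / c' * k + c := by field_simp; ring
    have : 0 ≤ c / c' * k := by positivity
    nlinarith
  have h4 : 0 ≤ ‖a k‖ := norm_nonneg _
  nlinarith

lemma uu_summable_aux {p q c : ℝ} (hp : 0 ≤ p) (hpq : p < q) (hc : 0 < c) :
    Summable fun k : ℕ => uu p q k / (k + c) := by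
  have hq : 0 < q := by linarith
  refine summable_shift hq hc ?_
  refine summable_of_sum_range_le (c := 1 / (q - p)) (fun k => ?_) (fun n => ?_)
  · have := uu_nonneg hp hq k
    positivity
  · have h1 : ∀ n : ℕ, (q - p) * ∑ i ∈ Finset.range n, uu p q i / (i + q) = 1 - uu p q n := by
      intro n
      rw [Finset.mul_sum, Finset.sum_congr rfl (fun i _ => (uu_sub (p := p) hq i).symm),
        Finset.sum_range_sub', uu_zero]
    rw [le_div_iff₀ (by linarith)]
    have := uu_nonneg hp hq n
    linarith [h1 n]

lemma uu_abs_le {p p' q : ℝ} (hpp : |p| ≤ p') (hq : 0 < q) (k : ℕ) :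
    |uu p q k| ≤ uu p' q k := by
  have hp' : 0 ≤ p' := le_trans (abs_nonneg _) hpp
  induction k with
  | zero => simp [uu_zero]
  | succ k ih =>
    have h2 : (0:ℝ) < k + q := by positivity
    have e : ∀ r, uu r q (k+1) = uu r q k * ((k + r) / (k + q)) := by
      intro r
      rw [← mul_div_assoc, ← uu_succ (p := r) hq k]; field_simp
    rw [e, e, abs_mul]
    apply mul_le_mul ih _ (abs_nonneg _) (uu_nonneg hp' hq k)
    rw [abs_div, abs_of_pos h2]
    gcongr
    calc |(k:ℝ) + p| ≤ |(k:ℝ)| + |p| := abs_add_le _ _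
      _ ≤ _ := by rw [Nat.abs_cast]; linarith

lemma uu_tendsto_aux {p q : ℝ} (hp : 0 ≤ p) (hpq : p < q) : Tendsto (uu p q) atTop (𝓝 0) := by
  have hq : 0 < q := by linarith
  have hanti : Antitone (uu p q) := by
    refine antitone_nat_of_succ_le fun k => ?_
    have h := uu_sub (p := p) hq k
    have h1 := uu_nonneg hp hq k
    have : 0 ≤ (q - p) * (uu p q k / (k + q)) := by
      apply mul_nonneg (by linarith); positivity
    linarith
  have hb : BddBelow (Set.range (uu p q)) := ⟨0, by rintro _ ⟨k, rfl⟩; exact uu_nonneg hp hq k⟩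
  have ht := tendsto_atTop_ciInf hanti hb
  set L := ⨅ i, uu p q i with hL
  have hL0 : 0 ≤ L := le_ciInf fun k => uu_nonneg hp hq k
  rcases hL0.eq_or_lt with h | h
  · rwa [← h] at ht
  · exfalso
    have hs := uu_summable_aux hp hpq (c := 1) one_pos
    have : Summable fun k : ℕ => L * (1 / ((k:ℝ) + 1)) := by
      refine Summable.of_nonneg_of_le (fun k => by positivity) (fun k => ?_) hs
      have h1 : L ≤ uu p q k := ciInf_le hb k
      rw [← mul_div_assoc, mul_one]
      gcongr
    have h2 : Summable fun k : ℕ => 1 / ((k:ℝ) + 1) := by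
      have := this.mul_left (1 / L)
      refine this.congr fun k => ?_
      field_simp
    have h3 := (summable_nat_add_iff (f := fun k : ℕ => 1 / (k:ℝ)) 1).1 (by simpa using h2)
    exact Real.not_summable_one_div_natCast h3

/-- admissible parameters -/
def Adm (p q : ℝ) : Prop := |p| ≤ 1 ∧ 1 < q ∨ 0 ≤ p ∧ p < q

lemma Adm.exists {p q : ℝ} (h : Adm p q) : ∃ p', 0 ≤ p' ∧ p' < q ∧ ∀ k, |uu p q k| ≤ uu p' q k := by
  rcases h with ⟨h1, h2⟩ | ⟨h1, h2⟩
  · exact ⟨1, by norm_num, h2, uu_abs_le h1 (by linarith)⟩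
  · refine ⟨p, h1, h2, fun k => (abs_of_nonneg (uu_nonneg h1 (by linarith) k)).le⟩

lemma Adm.q_pos {p q : ℝ} (h : Adm p q) : 0 < q := by
  rcases h with ⟨h1, h2⟩ | ⟨h1, h2⟩ <;> linarith

lemma Adm.summable {p q c : ℝ} (h : Adm p q) (hc : 0 < c) :
    Summable fun k : ℕ => uu p q k / (k + c) := by
  obtain ⟨p', h1, h2, h3⟩ := h.exists
  refine Summable.of_norm_bounded (uu_summable_aux h1 h2 hc) fun k => ?_
  have h4 : (0:ℝ) < k + c := by positivity
  rw [norm_div, Real.norm_of_nonneg h4.le]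
  gcongr
  exact h3 k

lemma Adm.tendsto {p q : ℝ} (h : Adm p q) : Tendsto (uu p q) atTop (𝓝 0) := by
  obtain ⟨p', h1, h2, h3⟩ := h.exists
  exact squeeze_zero_norm h3 (uu_tendsto_aux h1 h2)

/-- generic first-order recurrence summation -/
lemma rec_sum {v g : ℕ → ℝ} {α β c G : ℝ} (hc : 0 < c)
    (hv : Tendsto v atTop (𝓝 0)) (hs : Summable fun k : ℕ => v k / (k + 1))
    (hrec : ∀ k : ℕ, v (k + 1) * (k + 1 + α) = v k * (k + β) + g (k + 1))
    (hrec0 : v 0 * α = g 0)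
    (hG : HasSum (fun k : ℕ => g k / (k + c)) G) :
    (α - c) * ∑' k : ℕ, v k / (k + c) + (c + 1 - β) * ∑' k : ℕ, v k / (k + (c + 1)) = G := by
  have s0 : HasSum (fun k : ℕ => v k / (k + c)) _ := (summable_shift one_pos hc hs).hasSum
  have s1 : HasSum (fun k : ℕ => v k / (k + (c + 1))) _ :=
    (summable_shift one_pos (by linarith) hs).hasSum
  have key : ∀ N : ℕ, ∑ k ∈ Finset.range (N + 1), g k / (k + c) =
      (α - c) * ∑ k ∈ Finset.range (N + 1), v k / (k + c)
       + (c + 1 - β) * ∑ k ∈ Finset.range N, v k / (k + (c + 1)) + v N := by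
    intro N
    induction N with
    | zero =>
      simp only [zero_add, Finset.range_one, Finset.sum_singleton, Finset.range_zero, Finset.sum_empty]
      rw [← hrec0]; push_cast; field_simp; ring
    | succ N ih =>
      rw [Finset.sum_range_succ, ih, Finset.sum_range_succ _ (N + 1),
        Finset.sum_range_succ (fun k : ℕ => v k / (k + (c + 1))) N]
      have h := hrec N
      have : g (N + 1) = v (N + 1) * (N + 1 + α) - v N * (N + β) := by linarith
      rw [this]
      have h1 : (0:ℝ) < N + 1 + c := by positivity
      have h2 : (N:ℝ) + (c + 1) ≠ 0 := by positivity
      push_cast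
      rw [show (N:ℝ) + (c + 1) = N + 1 + c by ring]
      field_simp
      ring
  have l1 := (hG.tendsto_sum_nat).comp (tendsto_add_atTop_nat 1)
  have l2 := ((((s0.tendsto_sum_nat).comp (tendsto_add_atTop_nat 1)).const_mul (α - c)).add
    ((s1.tendsto_sum_nat).const_mul (c + 1 - β))).add hv
  rw [add_zero] at l2
  refine tendsto_nhds_unique l2 (l1.congr fun N => ?_)
  simpa using key N

lemma Adm.rec {p q c : ℝ} (h : Adm p q) (hc : 0 < c) :
    (c + 1 - p) * SS p q (c + 1) = (c + 1 - q) * SS p q c + (q - 1) / c := by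
  have hq := h.q_pos
  have := rec_sum (v := uu p q) (g := fun k => if k = 0 then q - 1 else 0) (α := q - 1) (β := p)
    (c := c) (G := (q - 1) / c) hc h.tendsto (h.summable one_pos)
    (fun k => by
      have := uu_succ (p := p) hq k
      simp; linarith) (by simp [uu_zero])
    (by
      convert! hasSum_ite_eq (0:ℕ) ((q-1)/c) using 2 with k
      split_ifs with h <;> simp [h])
  unfold SS
  linarith

lemma pf_hasSum {v : ℕ → ℝ} {a b : ℝ} (hs : Summable fun k : ℕ => v k / (k + 1))
    (ha : 0 < a) (hb : 0 < b) (hab : a ≠ b) :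
    HasSum (fun k : ℕ => v k / (k + a) / (k + b))
      ((∑' k : ℕ, v k / (k + a) - ∑' k : ℕ, v k / (k + b)) / (b - a)) := by
  have s0 := (summable_shift one_pos ha hs).hasSum
  have s1 := (summable_shift one_pos hb hs).hasSum
  convert! (s0.sub s1).div_const (b - a) using 2 with k
  have h1 : (k:ℝ) + a ≠ 0 := by positivity
  have h2 : (k:ℝ) + b ≠ 0 := by positivity
  have h3 : b - a ≠ 0 := sub_ne_zero.2 hab.symm
  field_simp
  ring

noncomputable def EE (θ : ℝ) (F : ℝ → ℝ) (c : ℝ) : ℝ :=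
  F (c + θ) - (θ - 1) * (θ - 2) / 2 * F c + θ * (θ - 2) * F (c + 1) - θ * (θ - 1) / 2 * F (c + 2)

lemma theta_bound {θ : ℝ} (h0 : 0 ≤ θ) (h1 : θ ≤ 1) : |θ * (θ - 1) * (θ - 2)| ≤ 2 := by
  rw [abs_mul, abs_mul, abs_of_nonneg h0, abs_of_nonpos (by linarith : θ - 1 ≤ 0),
    abs_of_nonpos (by linarith : θ - 2 ≤ 0)]
  have : θ * -(θ - 1) ≤ 1 := by nlinarith
  have : 0 ≤ θ * -(θ - 1) := mul_nonneg h0 (by linarith)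
  nlinarith

lemma EE_kernel {θ u x : ℝ} (h0 : 0 ≤ θ) (h1 : θ ≤ 1) (hx : 0 < x) (hxu : x ≤ u) :
    |1 / (u + θ) - (θ - 1) * (θ - 2) / 2 * (1 / u) + θ * (θ - 2) * (1 / (u + 1))
      - θ * (θ - 1) / 2 * (1 / (u + 2))| ≤ 2 / x ^ 3 * (1 / u) := by
  have hu : 0 < u := by linarith
  have e : 1 / (u + θ) - (θ - 1) * (θ - 2) / 2 * (1 / u) + θ * (θ - 2) * (1 / (u + 1))
      - θ * (θ - 1) / 2 * (1 / (u + 2)) =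
      - (θ * (θ - 1) * (θ - 2)) * (1 / ((u + 1) * (u + 2) * (u + θ) * u)) := by
    have : u + θ ≠ 0 := by positivity
    field_simp
    ring
  rw [e, abs_mul, abs_neg, abs_of_nonneg (a := 1 / _) (by positivity)]
  have h2 := theta_bound h0 h1
  have h3 : x ^ 3 * u ≤ (u + 1) * (u + 2) * (u + θ) * u := by
    have : x ^ 3 ≤ (u + 1) * (u + 2) * (u + θ) := by
      rw [show x ^ 3 = x * x * x by ring]
      gcongr <;> linarith
    gcongr
  calc _ ≤ 2 * (1 / (x ^ 3 * u)) := by gcongr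
    _ = _ := by field_simp

lemma EE_kernel2 {θ u v x : ℝ} (h0 : 0 ≤ θ) (h1 : θ ≤ 1) (hx : 0 < x) (hxu : x ≤ u) (hxv : x ≤ v) :
    |1 / ((u + θ) * (v + θ)) - (θ - 1) * (θ - 2) / 2 * (1 / (u * v))
      + θ * (θ - 2) * (1 / ((u + 1) * (v + 1)))
      - θ * (θ - 1) / 2 * (1 / ((u + 2) * (v + 2)))| ≤ 8 / x ^ 3 * (1 / (u * v)) := by
  have hu : 0 < u := by linarith
  have hv : 0 < v := by linarith
  have hut : 0 < u + θ := by linarith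
  have hvt : 0 < v + θ := by linarith
  have e : 1 / ((u + θ) * (v + θ)) - (θ - 1) * (θ - 2) / 2 * (1 / (u * v))
      + θ * (θ - 2) * (1 / ((u + 1) * (v + 1)))
      - θ * (θ - 1) / 2 * (1 / ((u + 2) * (v + 2))) =
      - (θ * (θ - 1) * (θ - 2)) * (1 / (u * (v * (v + 1) * (v + 2) * (v + θ)))
        + 1 / (u * (u + 1) * ((v + 1) * (v + 2) * (v + θ)))
        + 1 / (u * (u + 1) * (u + 2) * ((v + 2) * (v + θ)))
        + 1 / (u * (u + 1) * (u + 2) * (u + θ) * (v + θ))) := by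
    field_simp
    ring
  rw [e, abs_mul, abs_neg, abs_of_nonneg (a := 1 / _ + _ + _ + _) (by positivity)]
  have h2 := theta_bound h0 h1
  have b1 : 1 / (u * (v * (v + 1) * (v + 2) * (v + θ))) ≤ 1 / (x * x * x * (u * v)) := by
    apply one_div_le_one_div_of_le (by positivity)
    calc x * x * x * (u * v) ≤ (v + 1) * (v + 2) * (v + θ) * (u * v) := by gcongr <;> linarith
      _ = _ := by ring
  have b2 : 1 / (u * (u + 1) * ((v + 1) * (v + 2) * (v + θ))) ≤ 1 / (x * x * x * (u * v)) := by
    apply one_div_le_one_div_of_le (by positivity)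
    calc x * x * x * (u * v) ≤ (u + 1) * (v + 2) * (v + θ) * (u * (v + 1)) := by
          gcongr <;> linarith
      _ = _ := by ring
  have b3 : 1 / (u * (u + 1) * (u + 2) * ((v + 2) * (v + θ))) ≤ 1 / (x * x * x * (u * v)) := by
    apply one_div_le_one_div_of_le (by positivity)
    calc x * x * x * (u * v) ≤ (u + 1) * (u + 2) * (v + θ) * (u * (v + 2)) := by
          gcongr <;> linarith
      _ = _ := by ring
  have b4 : 1 / (u * (u + 1) * (u + 2) * (u + θ) * (v + θ)) ≤ 1 / (x * x * x * (u * v)) := by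
    apply one_div_le_one_div_of_le (by positivity)
    calc x * x * x * (u * v) ≤ (u + 1) * (u + 2) * (u + θ) * (u * (v + θ)) := by
          gcongr <;> linarith
      _ = _ := by ring
  calc _ ≤ 2 * (1 / (x * x * x * (u * v)) + 1 / (x * x * x * (u * v)) + 1 / (x * x * x * (u * v))
        + 1 / (x * x * x * (u * v))) := by gcongr
    _ = _ := by field_simp; ring

lemma EE_sum {v : ℕ → ℝ} {θ c x : ℝ} (hs : Summable fun k : ℕ => v k / (k + 1))
    (h0 : 0 ≤ θ) (h1 : θ ≤ 1) (hx : 0 < x) (hxc : x ≤ c) :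
    |EE θ (fun c => ∑' k : ℕ, v k / (k + c)) c| ≤ 2 / x ^ 3 * ∑' k : ℕ, |v k| / (k + c) := by
  have hc : 0 < c := by linarith
  have s := fun (c' : ℝ) (hc' : 0 < c') => (summable_shift one_pos hc' hs).hasSum
  have H := (((s (c + θ) (by linarith)).sub ((s c hc).mul_left ((θ - 1) * (θ - 2) / 2))).add
    ((s (c + 1) (by linarith)).mul_left (θ * (θ - 2)))).sub
    ((s (c + 2) (by linarith)).mul_left (θ * (θ - 1) / 2))
  have habs : Summable fun k : ℕ => |v k| / (k + c) := by
    refine (s c hc).summable.abs.congr fun k => ?_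
    rw [abs_div, abs_of_pos (by positivity : (0:ℝ) < k + c)]
  unfold EE
  rw [← H.tsum_eq, ← tsum_mul_left]
  rw [← Real.norm_eq_abs]
  refine tsum_of_norm_bounded (habs.mul_left _).hasSum fun k => ?_
  have hk := EE_kernel (u := k + c) h0 h1 hx (by have : (0:ℝ) ≤ k := by positivity
                                                 linarith)
  have : v k / (k + (c + θ)) - (θ - 1) * (θ - 2) / 2 * (v k / (k + c))
      + θ * (θ - 2) * (v k / (k + (c + 1))) - θ * (θ - 1) / 2 * (v k / (k + (c + 2))) =
      v k * (1 / (k + c + θ) - (θ - 1) * (θ - 2) / 2 * (1 / (k + c))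
      + θ * (θ - 2) * (1 / (k + c + 1)) - θ * (θ - 1) / 2 * (1 / (k + c + 2))) := by
    simp only [← add_assoc]; ring
  rw [this, norm_mul, Real.norm_eq_abs, Real.norm_eq_abs]
  calc _ ≤ |v k| * (2 / x ^ 3 * (1 / (k + c))) := by gcongr
    _ = _ := by ring

lemma EE_sum2 {v w : ℕ → ℝ} {θ c x : ℝ} (hs : Summable fun k : ℕ => v k / (k + 1))
    (hs' : Summable fun k : ℕ => w k / (k + 1)) (hv : ∀ k, 0 ≤ v k) (hw : ∀ k, 0 ≤ w k) {e : ℝ}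
    (h0 : 0 ≤ θ) (h1 : θ ≤ 1) (hx : 0 < x) (hxc : x ≤ c) (hxe : x ≤ c + e) :
    |EE θ (fun c => (∑' k : ℕ, v k / (k + c)) * ∑' k : ℕ, w k / (k + (c + e))) c| ≤
      8 / x ^ 3 * ((∑' k : ℕ, v k / (k + c)) * ∑' k : ℕ, w k / (k + (c + e))) := by
  have hc : 0 < c := by linarith
  have s : ∀ (c' : ℝ), c ≤ c' → HasSum (fun z : ℕ × ℕ => v z.1 / (z.1 + c') * (w z.2 / (z.2 + (c' + e))))
      ((∑' k : ℕ, v k / (k + c')) * ∑' k : ℕ, w k / (k + (c' + e))) := by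
    intro c' hc'
    have hc0 : 0 < c' := by linarith
    have hc1 : 0 < c' + e := by linarith
    have a1 := summable_shift one_pos hc0 hs
    have a2 := summable_shift one_pos hc1 hs'
    refine a1.hasSum.mul a2.hasSum (a1.mul_of_nonneg a2 ?_ ?_)
    · intro k; have := hv k; simp only [Pi.zero_apply]; positivity
    · intro k; have := hw k; simp only [Pi.zero_apply]; positivity
  have H := (((s (c + θ) (by linarith)).sub ((s c le_rfl).mul_left ((θ - 1) * (θ - 2) / 2))).add
    ((s (c + 1) (by linarith)).mul_left (θ * (θ - 2)))).sub
    ((s (c + 2) (by linarith)).mul_left (θ * (θ - 1) / 2))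
  unfold EE
  rw [← H.tsum_eq, ← Real.norm_eq_abs]
  refine tsum_of_norm_bounded ((s c le_rfl).mul_left _) fun z => ?_
  obtain ⟨n, k⟩ := z
  have hn0 : (0:ℝ) ≤ n := by positivity
  have hk0 : (0:ℝ) ≤ k := by positivity
  have hk := EE_kernel2 (u := n + c) (v := k + (c + e)) h0 h1 hx (by linarith) (by linarith)
  have hvn := hv n
  have hwk := hw k
  have : v n / (n + (c + θ)) * (w k / (k + (c + θ + e)))
      - (θ - 1) * (θ - 2) / 2 * (v n / (n + c) * (w k / (k + (c + e))))
      + θ * (θ - 2) * (v n / (n + (c + 1)) * (w k / (k + (c + 1 + e))))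
      - θ * (θ - 1) / 2 * (v n / (n + (c + 2)) * (w k / (k + (c + 2 + e)))) =
      v n * w k * (1 / ((n + c + θ) * (k + (c + e) + θ))
      - (θ - 1) * (θ - 2) / 2 * (1 / ((n + c) * (k + (c + e))))
      + θ * (θ - 2) * (1 / ((n + c + 1) * (k + (c + e) + 1)))
      - θ * (θ - 1) / 2 * (1 / ((n + c + 2) * (k + (c + e) + 2)))) := by
    simp only [div_mul_div_comm]
    rw [show (n:ℝ) + (c + θ) = n + c + θ by ring, show (k:ℝ) + (c + θ + e) = k + (c + e) + θ by ring,
      show (n:ℝ) + (c + 1) = n + c + 1 by ring, show (k:ℝ) + (c + 1 + e) = k + (c + e) + 1 by ring,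
      show (n:ℝ) + (c + 2) = n + c + 2 by ring, show (k:ℝ) + (c + 2 + e) = k + (c + e) + 2 by ring]
    ring
  simp only
  rw [this, norm_mul, Real.norm_eq_abs, Real.norm_eq_abs, abs_of_nonneg (by positivity : 0 ≤ v n * w k)]
  calc _ ≤ v n * w k * (8 / x ^ 3 * (1 / ((n + c) * (k + (c + e))))) := by gcongr
    _ = _ := by rw [one_div, mul_inv]; simp only [div_eq_mul_inv]; ring

lemma tendsto_SS {v : ℕ → ℝ} {c : ℝ} (hs : Summable fun k : ℕ => v k / (k + 1)) (hc : 0 < c) :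
    Tendsto (fun n : ℕ => ∑' k : ℕ, v k / (k + (n + c))) atTop (𝓝 0) := by
  have h1 := (summable_shift one_pos hc hs).norm
  have := tendsto_tsum_of_dominated_convergence (f := fun (n k : ℕ) => v k / (k + (n + c)))
    (g := fun _ => (0:ℝ)) (𝓕 := atTop) h1 (fun k => ?_) (Eventually.of_forall fun n k => ?_)
  · simpa using this
  · apply Tendsto.const_div_atTop
    apply tendsto_atTop_add_const_left
    apply tendsto_atTop_add_const_right
    exact tendsto_natCast_atTop_atTop
  · have hk : (0:ℝ) < k + c := by positivity
    have hk' : (0:ℝ) < k + (n + c) := by positivity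
    rw [norm_div, norm_div, Real.norm_of_nonneg hk.le, Real.norm_of_nonneg hk'.le]
    gcongr
    have : (0:ℝ) ≤ n := by positivity
    linarith


section Z
variable {d : ℝ}

lemma adm1 (h0 : 0 ≤ d) (h1 : d < 4/5) : Adm d 1 := Or.inr ⟨h0, by linarith⟩
lemma adm2 (h0 : 0 ≤ d) (h1 : d < 4/5) : Adm d (2 - d) := Or.inr ⟨h0, by linarith⟩
lemma adm3 (h0 : 0 ≤ d) (h1 : d < 4/5) : Adm (2 * d - 1) (2 - d) :=
  Or.inl ⟨abs_le.2 ⟨by linarith, by linarith⟩, by linarith⟩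

lemma SS_nonneg {p q c : ℝ} (hp : 0 ≤ p) (hq : 0 < q) (hc : 0 < c) : 0 ≤ SS p q c :=
  tsum_nonneg fun k => by have := uu_nonneg hp hq k; positivity

lemma SS_anti {p q c c' : ℝ} (hp : 0 ≤ p) (hpq : p < q) (hc : 0 < c) (hcc : c ≤ c') :
    SS p q c' ≤ SS p q c := by
  have h : Adm p q := Or.inr ⟨hp, hpq⟩
  refine Summable.tsum_le_tsum (fun k => ?_) (h.summable (by linarith)) (h.summable hc)
  have := uu_nonneg hp h.q_pos k
  gcongr

noncomputable def qq (d : ℝ) (n : ℕ) : ℝ := uu d 1 n * SS d (2 - d) (n + (2 - d))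

noncomputable def QQ (d c : ℝ) : ℝ := ∑' k : ℕ, qq d k / (k + c)

lemma SS2_base (h0 : 0 ≤ d) (h1 : d < 4/5) : (2 - 2 * d) * SS d (2 - d) (2 - d) = 1 := by
  have := (adm2 h0 h1).rec (c := 1 - d) (by linarith)
  rw [show 1 - d + 1 - d = 2 - 2 * d by ring, show 1 - d + 1 = 2 - d by ring] at this
  rw [this, sub_self, zero_mul, zero_add, show 2 - d - 1 = 1 - d by ring, div_self]
  linarith

lemma qq_nonneg (h0 : 0 ≤ d) (h1 : d < 4/5) (n : ℕ) : 0 ≤ qq d n := by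
  have hn : (0:ℝ) ≤ n := by positivity
  exact mul_nonneg (uu_nonneg h0 one_pos n) (SS_nonneg h0 (by linarith) (by linarith))

lemma qq_le (h0 : 0 ≤ d) (h1 : d < 4/5) (n : ℕ) : qq d n ≤ uu d 1 n * SS d (2 - d) (2 - d) := by
  have hn : (0:ℝ) ≤ n := by positivity
  exact mul_le_mul_of_nonneg_left (SS_anti h0 (by linarith) (by linarith) (by linarith))
    (uu_nonneg h0 one_pos n)

lemma qq_summable (h0 : 0 ≤ d) (h1 : d < 4/5) : Summable fun k : ℕ => qq d k / (k + 1) := by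
  refine Summable.of_nonneg_of_le (fun k => ?_) (fun k => ?_)
    (((adm1 h0 h1).summable one_pos).mul_right (SS d (2 - d) (2 - d)))
  · have := qq_nonneg h0 h1 k; positivity
  · rw [div_mul_eq_mul_div]
    have := qq_le h0 h1 k
    gcongr

lemma qq_tendsto (h0 : 0 ≤ d) (h1 : d < 4/5) : Tendsto (qq d) atTop (𝓝 0) := by
  refine squeeze_zero (qq_nonneg h0 h1) (qq_le h0 h1) ?_
  simpa using (adm1 h0 h1).tendsto.mul_const (SS d (2 - d) (2 - d))

lemma qq_rec (h0 : 0 ≤ d) (h1 : d < 4/5) (k : ℕ) :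
    qq d (k + 1) * (k + 1 + (2 - 2 * d)) = qq d k * (k + d) +
      (1 - d) * (uu d 1 (k + 1) / ((k + 1 : ℕ) + (1 - d))) := by
  have hk : (0:ℝ) ≤ k := by positivity
  have a := (adm2 h0 h1).rec (c := k + (2 - d)) (by linarith)
  have b := uu_succ (p := d) one_pos k
  unfold qq
  push_cast
  rw [show (k:ℝ) + (2 - d) + 1 = k + 1 + (2 - d) by ring] at a
  have c : (2 - d - 1) / ((k:ℝ) + (2 - d)) = (1 - d) / (k + 1 + (1 - d)) := by
    congr 1 <;> ring
  rw [c] at a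
  have : uu d 1 (k + 1) * SS d (2 - d) (k + 1 + (2 - d)) * (k + 1 + (2 - 2 * d))
     = uu d 1 (k + 1) * ((k + 1 + (2 - d) - d) * SS d (2 - d) (k + 1 + (2 - d))) := by ring
  rw [this, a]
  have : uu d 1 k * SS d (2 - d) (k + (2 - d)) * (k + d) =
    (uu d 1 k * (k + d)) * SS d (2 - d) (k + (2 - d)) := by ring
  rw [this, ← b]
  ring

lemma QQ_rec (h0 : 0 ≤ d) (h1 : d < 4/5) {c : ℝ} (hc : 1 - d < c) :
    (2 - 2 * d - c) * QQ d c + (c + 1 - d) * QQ d (c + 1) =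
      (1 - d) * ((SS d 1 (1 - d) - SS d 1 c) / (c - (1 - d))) := by
  have hpf := (pf_hasSum ((adm1 h0 h1).summable one_pos) (by linarith : 0 < 1 - d)
    (by linarith : 0 < c) hc.ne).mul_left (1 - d)
  refine rec_sum (v := qq d) (g := fun k => (1 - d) * (uu d 1 k / (k + (1 - d)))) (by linarith)
    (qq_tendsto h0 h1) (qq_summable h0 h1) (qq_rec h0 h1) ?_ ?_
  · have : 1 - d ≠ 0 := by linarith
    have := SS2_base h0 h1
    simp only [qq, uu_zero, Nat.cast_zero, zero_add]
    field_simp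
    linarith
  · simp only [mul_div_assoc]
    exact hpf

noncomputable def DD (d c : ℝ) : ℝ :=
  QQ d c + SS d 1 c * SS d (2 - d) (c + (d - 1)) - SS d 1 (1 - d) * SS (2 * d - 1) (2 - d) (c + (d - 1))

lemma DD_rec (h0 : 0 ≤ d) (h1 : d < 4/5) {c : ℝ} (hc : 1 - d < c) :
    (c + 1 - d) * DD d (c + 1) = (c - 2 + 2 * d) * DD d c := by
  have a := QQ_rec h0 h1 hc
  have b := (adm1 h0 h1).rec (c := c) (by linarith)
  have e := (adm2 h0 h1).rec (c := c + (d - 1)) (by linarith)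
  have f := (adm3 h0 h1).rec (c := c + (d - 1)) (by linarith)
  unfold DD
  rw [show c + 1 + (d - 1) = c + (d - 1) + 1 by ring]
  have hc' : c + (d - 1) ≠ 0 := by linarith
  rw [show c - (1 - d) = c + (d - 1) by ring] at a
  field_simp at a e f b
  generalize SS d 1 (c + 1) = K1 at *
  generalize SS d (2 - d) (c + (d - 1) + 1) = M1 at *
  generalize SS (2 * d - 1) (2 - d) (c + (d - 1) + 1) = R1 at *
  generalize QQ d (c + 1) = Q1 at *
  generalize SS d 1 c = K0 at *
  generalize SS d (2 - d) (c + (d - 1)) = M0 at *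
  generalize SS (2 * d - 1) (2 - d) (c + (d - 1)) = R0 at *
  generalize SS d 1 (1 - d) = KK at *
  rw [← sub_eq_zero]
  refine (mul_eq_zero.1 (?_ : (c + (d - 1)) * _ = 0)).resolve_left hc'
  linear_combination a + (c + (d - 1)) * M1 * b + K0 * e - KK * f

lemma DD_zero (h0 : 0 ≤ d) (h1 : d < 4/5) (n : ℕ) : DD d (n + (3 - 2 * d)) = 0 := by
  have hd : 0 < 1 - d := by linarith
  induction n with
  | zero =>
    have := DD_rec h0 h1 (c := 2 - 2 * d) (by linarith)
    rw [show 2 - 2 * d - 2 + 2 * d = 0 by ring, zero_mul] at this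
    rw [Nat.cast_zero, show 0 + (3 - 2 * d) = 2 - 2 * d + 1 by ring]
    exact (mul_eq_zero.1 this).resolve_left (by linarith)
  | succ n ih =>
    have hn : (0:ℝ) ≤ n := by positivity
    have := DD_rec h0 h1 (c := n + (3 - 2 * d)) (by linarith)
    rw [ih, mul_zero] at this
    push_cast
    rw [show (n:ℝ) + 1 + (3 - 2 * d) = n + (3 - 2 * d) + 1 by ring]
    exact (mul_eq_zero.1 this).resolve_left (by linarith)

lemma DD_bound (h0 : 0 ≤ d) (h1 : d < 4/5) (n : ℕ) :
    |DD d (n + (4 - 3 * d))| * (n + (2 - d)) ^ 3 ≤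
      2 * (∑' k : ℕ, |qq d k| / (k + (n + (3 - 2 * d)))) +
      8 * ((∑' k : ℕ, uu d 1 k / (k + (n + (3 - 2 * d)))) *
        (∑' k : ℕ, uu d (2 - d) k / (k + (n + (2 - d))))) +
      |SS d 1 (1 - d)| * (2 * ∑' k : ℕ, |uu (2 * d - 1) (2 - d) k| / (k + (n + (2 - d)))) := by
  have hn : (0:ℝ) ≤ n := by positivity
  set c : ℝ := n + (3 - 2 * d) with hcdef
  set x : ℝ := n + (2 - d) with hxdef
  have hx : 0 < x := by rw [hxdef]; linarith
  have hce : c + (d - 1) = x := by rw [hcdef, hxdef]; ring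
  have t0 : 0 ≤ 1 - d := by linarith
  have t1 : 1 - d ≤ 1 := by linarith
  have b1 := EE_sum (θ := 1 - d) (c := c) (x := x) (qq_summable h0 h1) t0 t1 hx (by linarith)
  have b2 := EE_sum2 (θ := 1 - d) (c := c) (x := x) (e := d - 1) ((adm1 h0 h1).summable one_pos)
    ((adm2 h0 h1).summable one_pos) (uu_nonneg h0 one_pos) (uu_nonneg h0 (by linarith)) t0 t1 hx
    (by linarith) (by linarith)
  have b3 := EE_sum (θ := 1 - d) (c := x) (x := x) ((adm3 h0 h1).summable one_pos) t0 t1 hx le_rfl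
  rw [hce] at b2
  have e : DD d (n + (4 - 3 * d)) = EE (1 - d) (fun c => ∑' k : ℕ, qq d k / (k + c)) c +
     EE (1 - d) (fun c => (∑' k : ℕ, uu d 1 k / (k + c)) *
        ∑' k : ℕ, uu d (2 - d) k / (k + (c + (d - 1)))) c
     - SS d 1 (1 - d) * EE (1 - d) (fun c => ∑' k : ℕ, uu (2 * d - 1) (2 - d) k / (k + c)) x := by
    have z0 := DD_zero h0 h1 n
    have z1 := DD_zero h0 h1 (n + 1)
    have z2 := DD_zero h0 h1 (n + 2)
    push_cast at z1 z2
    rw [show (n:ℝ) + 1 + (3 - 2 * d) = c + 1 by rw [hcdef]; ring] at z1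
    rw [show (n:ℝ) + 2 + (3 - 2 * d) = c + 2 by rw [hcdef]; ring] at z2
    rw [← hcdef] at z0
    rw [show (n:ℝ) + (4 - 3 * d) = c + (1 - d) by rw [hcdef]; ring, ← hce]
    unfold DD at *
    unfold EE
    change _ = QQ d (c + (1 - d)) - _ * QQ d c + _ * QQ d (c + 1) - _ * QQ d (c + 2) +
      (SS d 1 (c + (1 - d)) * SS d (2 - d) (c + (1 - d) + (d - 1))
        - _ * (SS d 1 c * SS d (2 - d) (c + (d - 1)))
        + _ * (SS d 1 (c + 1) * SS d (2 - d) (c + 1 + (d - 1)))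
        - _ * (SS d 1 (c + 2) * SS d (2 - d) (c + 2 + (d - 1))))
      - _ * (SS (2 * d - 1) (2 - d) (c + (d - 1) + (1 - d)) - _ * SS (2 * d - 1) (2 - d) (c + (d - 1))
        + _ * SS (2 * d - 1) (2 - d) (c + (d - 1) + 1)
        - _ * SS (2 * d - 1) (2 - d) (c + (d - 1) + 2))
    rw [show c + (d - 1) + (1 - d) = c + (1 - d) + (d - 1) by ring,
      show c + (d - 1) + 1 = c + 1 + (d - 1) by ring, show c + (d - 1) + 2 = c + 2 + (d - 1) by ring]
    linear_combination ((1 - d - 1) * (1 - d - 2) / 2) * z0 - ((1 - d) * (1 - d - 2)) * z1 +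
      ((1 - d) * (1 - d - 1) / 2) * z2
  rw [e]
  have tri : ∀ p q r : ℝ, |p + q - r| ≤ |p| + |q| + |r| := fun p q r => by
    have := abs_sub (p + q) r
    have := abs_add_le p q
    linarith
  have hx3 : 0 < x ^ 3 := by positivity
  refine le_trans (mul_le_mul_of_nonneg_right (tri _ _ _) hx3.le) ?_
  rw [abs_mul, add_mul, add_mul]
  have cl : ∀ {A B t : ℝ}, A ≤ t / x ^ 3 * B → A * x ^ 3 ≤ t * B := by
    intro A B t h
    calc A * x ^ 3 ≤ (t / x ^ 3 * B) * x ^ 3 := by gcongr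
      _ = t * B := by field_simp
  rw [mul_assoc |SS d 1 (1 - d)|]
  exact add_le_add (add_le_add (cl b1) (cl b2)) (mul_le_mul_of_nonneg_left (cl b3) (abs_nonneg _))

lemma DD_main (h0 : 0 ≤ d) (h1 : d < 4/5) : DD d (3 - 3 * d) = 0 := by
  have hmono : ∀ n : ℕ, |DD d (4 - 3 * d)| * (2 - d) ^ 3 ≤
      |DD d (n + (4 - 3 * d))| * (n + (2 - d)) ^ 3 := by
    intro n
    induction n with
    | zero => simp
    | succ n ih =>
      refine ih.trans ?_
      have hn : (0:ℝ) ≤ n := by positivity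
      have := DD_rec h0 h1 (c := n + (4 - 3 * d)) (by linarith)
      push_cast
      rw [show (n:ℝ) + 1 + (4 - 3 * d) = n + (4 - 3 * d) + 1 by ring]
      set y : ℝ := n + (2 - d) with hy
      have hy0 : 0 < y := by rw [hy]; linarith
      rw [show (n:ℝ) + (4 - 3 * d) + 1 - d = y + (3 - 3 * d) by rw [hy]; ring,
        show (n:ℝ) + (4 - 3 * d) - 2 + 2 * d = y by rw [hy]; ring] at this
      have h2 := congrArg abs this
      rw [abs_mul, abs_mul, abs_of_pos hy0, abs_of_pos (by linarith : 0 < y + (3 - 3 * d))] at h2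
      rw [show (n:ℝ) + 1 + (2 - d) = y + 1 by rw [hy]; ring]
      calc |DD d (n + (4 - 3 * d))| * y ^ 3 = (y * |DD d (n + (4 - 3 * d))|) * y ^ 2 := by ring
        _ = |DD d (n + (4 - 3 * d) + 1)| * ((y + (3 - 3 * d)) * y ^ 2) := by rw [← h2]; ring
        _ ≤ _ := by
          gcongr
          nlinarith [sq_nonneg y, mul_nonneg h0 (sq_nonneg y)]
  have l1 := (tendsto_SS (v := fun k => |qq d k|) (c := 3 - 2 * d)
    ((qq_summable h0 h1).congr fun k => by rw [abs_of_nonneg (qq_nonneg h0 h1 k)])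
    (by linarith)).const_mul 2
  have l2 := ((tendsto_SS (c := 3 - 2 * d) ((adm1 h0 h1).summable one_pos) (by linarith)).mul
    (tendsto_SS (c := 2 - d) ((adm2 h0 h1).summable one_pos) (by linarith))).const_mul 8
  have l3 := ((tendsto_SS (v := fun k => |uu (2 * d - 1) (2 - d) k|) (c := 2 - d)
    (((adm3 h0 h1).summable one_pos).abs.congr fun k => by
      rw [abs_div, abs_of_pos (by positivity : (0:ℝ) < k + 1)])
    (by linarith)).const_mul 2).const_mul |SS d 1 (1 - d)|
  have l := (l1.add l2).add l3
  simp only [mul_zero, add_zero] at l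
  have hle : |DD d (4 - 3 * d)| * (2 - d) ^ 3 ≤ 0 :=
    ge_of_tendsto l (Eventually.of_forall fun n => (hmono n).trans (DD_bound h0 h1 n))
  have h2 : 0 < (2 - d) ^ 3 := by apply pow_pos; linarith
  have h3 : DD d (4 - 3 * d) = 0 := by
    have := abs_nonneg (DD d (4 - 3 * d))
    have : |DD d (4 - 3 * d)| = 0 := by nlinarith
    exact abs_eq_zero.1 this
  have := DD_rec h0 h1 (c := 3 - 3 * d) (by linarith)
  rw [show 3 - 3 * d + 1 = 4 - 3 * d by ring, h3, mul_zero] at this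
  exact (mul_eq_zero.1 this.symm).resolve_left (by linarith)

end Z

section T
variable {d : ℝ}

noncomputable def TT (d : ℝ) (n : ℕ) : ℝ := SS d (2 - d) (n + (4 - 3 * d)) * qq d n

noncomputable def PP (d : ℝ) (n : ℕ) : ℝ := uu d 1 n / (n + (1 - d)) * SS d (2 - d) (n + (3 - 3 * d))

noncomputable def FF (d : ℝ) (n : ℕ) : ℝ := (1 - d) * (PP d n + qq d n / (n + (3 - 3 * d)))

noncomputable def XX (d : ℝ) : ℝ := ∑' k : ℕ, uu d (2 - d) k / (k + (2 - 2 * d)) * SS d 1 (k + (3 - 3 * d))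

lemma TT_nonneg (h0 : 0 ≤ d) (h1 : d < 4/5) (n : ℕ) : 0 ≤ TT d n := by
  have hn : (0:ℝ) ≤ n := by positivity
  exact mul_nonneg (SS_nonneg h0 (by linarith) (by linarith)) (qq_nonneg h0 h1 n)

lemma TT_rec (h0 : 0 ≤ d) (h1 : d < 4/5) (n : ℕ) :
    (n + 1 + (4 - 4 * d)) * TT d (n + 1) = FF d (n + 1) + (n + d) * TT d n := by
  have hn : (0:ℝ) ≤ n := by positivity
  have a := (adm2 h0 h1).rec (c := n + (4 - 3 * d)) (by linarith)
  have b := qq_rec h0 h1 n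
  unfold TT FF PP
  push_cast at *
  rw [show (n:ℝ) + (4 - 3 * d) + 1 = n + 1 + (4 - 3 * d) by ring] at a
  rw [show (n:ℝ) + 1 + (3 - 3 * d) = n + (4 - 3 * d) by ring]
  linear_combination qq d (n + 1) * a + SS d (2 - d) (n + (4 - 3 * d)) * b

lemma TT_rec0 (h0 : 0 ≤ d) (h1 : d < 4/5) : (4 - 4 * d) * TT d 0 = FF d 0 := by
  have a := (adm2 h0 h1).rec (c := 3 - 3 * d) (by linarith)
  have b := SS2_base h0 h1
  have hd : 1 - d ≠ 0 := by linarith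
  have hd' : 3 - 3 * d ≠ 0 := by linarith
  unfold TT FF PP qq
  simp only [uu_zero, Nat.cast_zero, zero_add, one_mul]
  rw [show 3 - 3 * d + 1 = 4 - 3 * d by ring] at a
  have e1 : (1 - d) * (1 / (1 - d)) = 1 := mul_one_div_cancel hd
  linear_combination (SS d (2 - d) (2 - d)) * a + SS d (2 - d) (3 - 3 * d) * b
    - SS d (2 - d) (3 - 3 * d) * e1

lemma TT_partial (h0 : 0 ≤ d) (h1 : d < 4/5) (N : ℕ) :
    ∑ n ∈ Finset.range (N + 1), FF d n =
      (4 - 5 * d) * ∑ n ∈ Finset.range N, TT d n + TT d N * (N + (4 - 4 * d)) := by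
  induction N with
  | zero => simp [← TT_rec0 h0 h1]; ring
  | succ N ih =>
    rw [Finset.sum_range_succ, ih, Finset.sum_range_succ (TT d)]
    have := TT_rec h0 h1 N
    push_cast
    linear_combination -this

lemma PP_nonneg (h0 : 0 ≤ d) (h1 : d < 4/5) (n : ℕ) : 0 ≤ PP d n := by
  have hn : (0:ℝ) ≤ n := by positivity
  have := uu_nonneg h0 one_pos n
  have h3 : 0 < (n:ℝ) + (1 - d) := by linarith
  exact mul_nonneg (by positivity) (SS_nonneg h0 (by linarith) (by linarith))

lemma PP_summable (h0 : 0 ≤ d) (h1 : d < 4/5) : Summable (PP d) := by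
  refine Summable.of_nonneg_of_le (PP_nonneg h0 h1) (fun n => ?_)
    (((adm1 h0 h1).summable (by linarith : 0 < 1 - d)).mul_right (SS d (2 - d) (3 - 3 * d)))
  have hn : (0:ℝ) ≤ n := by positivity
  have := uu_nonneg h0 one_pos n
  have h3 : 0 < (n:ℝ) + (1 - d) := by linarith
  exact mul_le_mul_of_nonneg_left (SS_anti h0 (by linarith) (by linarith) (by linarith))
    (by positivity)

lemma XX_hasSum (h0 : 0 ≤ d) (h1 : d < 4/5) :
    HasSum (fun k : ℕ => uu d (2 - d) k / (k + (2 - 2 * d)) * SS d 1 (k + (3 - 3 * d))) (XX d) := by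
  refine Summable.hasSum ?_
  refine Summable.of_nonneg_of_le (fun n => ?_) (fun n => ?_)
    (((adm2 h0 h1).summable (by linarith : 0 < 2 - 2 * d)).mul_right (SS d 1 (3 - 3 * d)))
  all_goals
    have hn : (0:ℝ) ≤ n := by positivity
    have := uu_nonneg h0 (by linarith : 0 < 2 - d) n
    have h3 : 0 < (n:ℝ) + (2 - 2 * d) := by linarith
  · exact mul_nonneg (by positivity) (SS_nonneg h0 (by linarith) (by linarith))
  · exact mul_le_mul_of_nonneg_left (SS_anti h0 (by linarith) (by linarith) (by linarith))
      (by positivity)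

lemma PP_tsum (h0 : 0 ≤ d) (h1 : d < 4/5) :
    ∑' n, PP d n = SS d 1 (1 - d) * SS d (2 - d) (2 - 2 * d) - XX d := by
  let F : ℕ → ℕ → ℝ := fun n k => uu d 1 n / (n + (1 - d)) * (uu d (2 - d) k / (k + (n + (3 - 3 * d))))
  have hFn : ∀ n, HasSum (F n) (PP d n) := by
    intro n
    have hn : (0:ℝ) ≤ n := by positivity
    exact ((adm2 h0 h1).summable (by linarith : 0 < n + (3 - 3 * d))).hasSum.mul_left _
  have hF0 : ∀ z : ℕ × ℕ, 0 ≤ Function.uncurry F z := by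
    rintro ⟨n, k⟩
    have hn : (0:ℝ) ≤ n := by positivity
    have hk : (0:ℝ) ≤ k := by positivity
    have a1 := uu_nonneg h0 one_pos n
    have a2 := uu_nonneg h0 (by linarith : 0 < 2 - d) k
    have h3 : 0 < (n:ℝ) + (1 - d) := by linarith
    have h4 : 0 < (k:ℝ) + (n + (3 - 3 * d)) := by linarith
    simp only [Function.uncurry, F]
    positivity
  have hs : Summable (Function.uncurry F) := by
    rw [summable_prod_of_nonneg hF0]
    refine ⟨fun n => (hFn n).summable, ?_⟩
    refine (PP_summable h0 h1).congr fun n => ?_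
    exact (hFn n).tsum_eq.symm
  have hcomm := hs.tsum_comm
  rw [tsum_congr (fun n => (hFn n).tsum_eq.symm), hcomm.symm]
  have hk : ∀ k : ℕ, ∑' n, F n k = uu d (2 - d) k / (k + (2 - 2 * d)) * SS d 1 (1 - d)
      - uu d (2 - d) k / (k + (2 - 2 * d)) * SS d 1 (k + (3 - 3 * d)) := by
    intro k
    have hk : (0:ℝ) ≤ k := by positivity
    have := (pf_hasSum ((adm1 h0 h1).summable one_pos) (by linarith : 0 < 1 - d)
      (by linarith : 0 < k + (3 - 3 * d)) (by linarith)).mul_left (uu d (2 - d) k)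
    rw [← mul_sub, div_mul_eq_mul_div, mul_div_assoc,
      show (k:ℝ) + (2 - 2 * d) = k + (3 - 3 * d) - (1 - d) by ring]
    refine Eq.trans (tsum_congr fun n => ?_) this.tsum_eq
    simp only [F]
    rw [show (n:ℝ) + (k + (3 - 3 * d)) = k + (n + (3 - 3 * d)) by ring]
    ring
  rw [tsum_congr hk]
  have s2 := ((adm2 h0 h1).summable (by linarith : 0 < 2 - 2 * d)).hasSum.mul_right (SS d 1 (1 - d))
  rw [(s2.sub (XX_hasSum h0 h1)).tsum_eq, mul_comm]
  rfl

lemma lim_zero_of_summable {T : ℕ → ℝ} {a L : ℝ} (ha : 0 < a) (hT : Summable T)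
    (h : Tendsto (fun n : ℕ => T n * (n + a)) atTop (𝓝 L)) : L = 0 := by
  by_contra hL
  have h1 : Summable fun n : ℕ => 1 / ((n:ℝ) + a) := by
    refine summable_of_isBigO_nat hT (Asymptotics.IsBigO.of_bound (2 / |L|) ?_)
    have h2 := h.abs.eventually (lt_mem_nhds (by have := abs_pos.2 hL; linarith : |L| / 2 < |L|))
    filter_upwards [h2] with n hn
    have hL' := abs_pos.2 hL
    have hp : 0 < (n:ℝ) + a := by positivity
    rw [abs_mul, abs_of_pos hp] at hn
    rw [Real.norm_eq_abs, Real.norm_eq_abs, abs_of_pos (by positivity), div_mul_eq_mul_div,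
      div_le_div_iff₀ hp hL']
    linarith
  have h2 : Summable fun n : ℕ => 1 / ((n:ℝ) + 1) := summable_shift (a := fun _ => 1) ha one_pos h1
  have h3 := (summable_nat_add_iff (f := fun k : ℕ => 1 / (k:ℝ)) 1).1 (by simpa using h2)
  exact Real.not_summable_one_div_natCast h3

lemma TT_hasSum (h0 : 0 ≤ d) (h1 : d < 4/5) :
    Summable (TT d) ∧ (4 - 5 * d) * ∑' n, TT d n = (1 - d) *
      (SS d 1 (1 - d) * SS d (2 - d) (2 - 2 * d) - XX d + QQ d (3 - 3 * d)) := by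
  have hE : HasSum (FF d) ((1 - d) *
      (SS d 1 (1 - d) * SS d (2 - d) (2 - 2 * d) - XX d + QQ d (3 - 3 * d))) := by
    have a1 := (PP_summable h0 h1).hasSum
    rw [PP_tsum h0 h1] at a1
    exact (a1.add (summable_shift one_pos (by linarith : 0 < 3 - 3 * d)
      (qq_summable h0 h1)).hasSum).mul_left (1 - d)
  have hE0 : ∀ n, 0 ≤ FF d n := by
    intro n
    have hn : (0:ℝ) ≤ n := by positivity
    refine mul_nonneg (by linarith) (add_nonneg (PP_nonneg h0 h1 n) (div_nonneg (qq_nonneg h0 h1 n) ?_))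
    linarith
  set G := (1 - d) * (SS d 1 (1 - d) * SS d (2 - d) (2 - 2 * d) - XX d + QQ d (3 - 3 * d)) with hG
  have h45 : 0 < 4 - 5 * d := by linarith
  have hsum : Summable (TT d) := by
    refine summable_of_sum_range_le (c := G / (4 - 5 * d)) (TT_nonneg h0 h1) fun N => ?_
    rw [le_div_iff₀ h45]
    have a := TT_partial h0 h1 N
    have b := sum_le_hasSum (Finset.range (N + 1)) (fun i _ => hE0 i) hE
    have hN : (0:ℝ) ≤ N := by positivity
    have := mul_nonneg (TT_nonneg h0 h1 N) (by linarith : 0 ≤ N + (4 - 4 * d))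
    linarith
  refine ⟨hsum, ?_⟩
  have l1 := hE.tendsto_sum_nat.comp (tendsto_add_atTop_nat 1)
  have l2 := hsum.hasSum.tendsto_sum_nat.const_mul (4 - 5 * d)
  have l3 := l1.sub l2
  have := lim_zero_of_summable (a := 4 - 4 * d) (by linarith) hsum (l3.congr fun N => by
    have := TT_partial h0 h1 N
    simp only [Function.comp]
    linarith)
  linarith

lemma TT_final (h0 : 0 ≤ d) (h1 : d < 4/5) :
    (4 - 5 * d) * ∑' n, TT d n = (1 - d) *
      (SS d 1 (1 - d) * SS (2 * d - 1) (2 - d) (2 - 2 * d)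
       - (SS d 1 (3 - 3 * d) - SS d 1 (1 - d)) * SS d (2 - d) (2 - 2 * d) - XX d) := by
  rw [(TT_hasSum h0 h1).2]
  have := DD_main h0 h1
  unfold DD at this
  rw [show 3 - 3 * d + (d - 1) = 2 - 2 * d by ring] at this
  linear_combination (1 - d) * this

end T

lemma termwise {a b : ℕ → ℝ} {g G : ℝ → ℝ} (ha : ∀ n, 0 ≤ a n)
    (hg : ∀ x ∈ Set.Ioo (0:ℝ) 1, 0 ≤ g x)
    (hint : ∀ n : ℕ, IntegrableOn (fun x => x ^ n * g x) (Set.Ioo (0:ℝ) 1))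
    (hb : ∀ n : ℕ, ∫ x in Set.Ioo (0:ℝ) 1, x ^ n * g x = b n)
    (hs : Summable fun n => a n * b n)
    (hG : ∀ x ∈ Set.Ioo (0:ℝ) 1, HasSum (fun n => a n * x ^ n) (G x)) :
    ∫ x in Set.Ioo (0:ℝ) 1, G x * g x = ∑' n, a n * b n := by
  have h1 := hasSum_integral_of_summable_integral_norm (μ := volume.restrict (Set.Ioo (0:ℝ) 1))
    (F := fun n x => a n * (x ^ n * g x)) (fun n => (hint n).const_mul _) (by
      refine hs.congr fun n => ?_
      rw [← hb n, ← integral_const_mul]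
      refine setIntegral_congr_fun measurableSet_Ioo fun x hx => ?_
      have := ha n
      have := hg x hx
      have := hx.1
      beta_reduce
      rw [Real.norm_of_nonneg (by positivity)])
  have h2 : ∫ x in Set.Ioo (0:ℝ) 1, ∑' n, a n * (x ^ n * g x) = ∫ x in Set.Ioo (0:ℝ) 1, G x * g x := by
    refine setIntegral_congr_fun measurableSet_Ioo fun x hx => ?_
    beta_reduce
    rw [← ((hG x hx).mul_right (g x)).tsum_eq]
    exact tsum_congr fun n => by ring
  rw [h2] at h1
  rw [← h1.tsum_eq]
  exact tsum_congr fun n => by rw [integral_const_mul, hb]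

lemma int_pow {c : ℝ} (hc : 0 < c) (n : ℕ) :
    IntegrableOn (fun x : ℝ => x ^ n * x ^ (c - 1)) (Set.Ioo (0:ℝ) 1) ∧
    ∫ x in Set.Ioo (0:ℝ) 1, x ^ n * x ^ (c - 1) = 1 / (n + c) := by
  have hn : (0:ℝ) ≤ n := by positivity
  have e : Set.EqOn (fun x : ℝ => x ^ ((n:ℝ) + (c - 1))) (fun x : ℝ => x ^ n * x ^ (c - 1))
      (Set.Ioo (0:ℝ) 1) := fun x hx => by
    beta_reduce
    rw [Real.rpow_add hx.1, Real.rpow_natCast]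
  constructor
  · refine IntegrableOn.congr_fun ?_ e measurableSet_Ioo
    rw [intervalIntegral.integrableOn_Ioo_rpow_iff one_pos]
    linarith
  · rw [← setIntegral_congr_fun measurableSet_Ioo e, ← integral_Ioc_eq_integral_Ioo,
      ← intervalIntegral.integral_of_le zero_le_one, integral_rpow (Or.inl (by linarith)),
      Real.one_rpow, Real.zero_rpow (by linarith)]
    congr 1
    · simp
    · ring

lemma binom_hasSum {d z : ℝ} (h0 : 0 ≤ z) (h1 : z < 1) :
    HasSum (fun n => uu d 1 n * z ^ n) ((1 - z) ^ (-d)) := by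
  have h := (Real.one_div_one_sub_rpow_hasFPowerSeriesOnBall_zero d).hasSum (y := z) (by
    simp [Real.enorm_of_nonneg h0, h1])
  simp only [zero_add] at h
  rw [Real.rpow_neg (by linarith), ← one_div]
  refine h.congr_fun fun n => ?_
  simp [FormalMultilinearSeries.ofScalars]
  left
  rw [← Ring.multichoose_eq, uu, poch_one, eq_comm, eq_div_iff (by positivity)]
  have := Ring.factorial_nsmul_multichoose_eq_ascPochhammer d n
  rw [Polynomial.ascPochhammer_smeval_eq_eval, nsmul_eq_mul] at this
  rw [poch, ← this, mul_comm]

lemma beta_real {c b : ℝ} (hc : 0 < c) (hb : 0 < b) :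
    ∫ x in Set.Ioo (0:ℝ) 1, (1 - x) ^ (b - 1) * x ^ (c - 1) =
      Real.Gamma c * Real.Gamma b / Real.Gamma (c + b) := by
  have h := ProbabilityTheory.beta_eq_betaIntegralReal c b hc hb
  rw [ProbabilityTheory.beta] at h
  rw [h, Complex.betaIntegral, intervalIntegral.integral_of_le (by norm_num),
      ← integral_Ioc_eq_integral_Ioo, ← RCLike.re_to_complex, ← integral_re]
  · refine setIntegral_congr_fun measurableSet_Ioc fun x ⟨hx1, hx₂⟩ ↦ ?_
    norm_cast
    rw [← Complex.ofReal_cpow, ← Complex.ofReal_cpow, RCLike.re_to_complex,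
        Complex.re_mul_ofReal, Complex.ofReal_re, mul_comm]
    all_goals linarith
  · have := Complex.betaIntegral_convergent (u := c) (v := b) (by simpa) (by simpa)
    rwa [intervalIntegrable_iff_integrableOn_Ioc_of_le (by simp), IntegrableOn] at this

section I
variable {d : ℝ}

lemma K_gamma (h0 : 0 ≤ d) (h1 : d < 4/5) {c : ℝ} (hc : 0 < c) :
    SS d 1 c = Real.Gamma c * Real.Gamma (1 - d) / Real.Gamma (c + (1 - d)) := by
  rw [← beta_real hc (by linarith : 0 < 1 - d), sub_sub_cancel_left,
    termwise (uu_nonneg h0 one_pos) (fun x hx => Real.rpow_nonneg hx.1.le _)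
    (fun n => (int_pow hc n).1) (fun n => (int_pow hc n).2) ?_
    (fun x hx => binom_hasSum hx.1.le hx.2)]
  · exact tsum_congr fun n => by ring
  · exact ((adm1 h0 h1).summable hc).congr fun n => by ring

lemma hyp2_hasSum (h0 : 0 ≤ d) (h1 : d < 4/5) {x : ℝ} (hx : x ∈ Set.Ioo (0:ℝ) 1) :
    HasSum (fun n => uu d (2 - d) n * x ^ n) (hyp2F1 1 d (2 - d) x) := by
  have hs : Summable fun n => uu d (2 - d) n * x ^ n := by
    refine Summable.of_nonneg_of_le (fun n => ?_) (fun n => ?_)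
      (summable_geometric_of_lt_one hx.1.le hx.2)
    · exact mul_nonneg (uu_nonneg h0 (by linarith) n) (pow_nonneg hx.1.le n)
    · exact mul_le_of_le_one_left (pow_nonneg hx.1.le n)
        (uu_le_one h0 (by linarith) (by linarith) n)
  have := hs.hasSum
  convert this using 1
  rw [hyp2F1]
  refine tsum_congr fun n => ?_
  have : (Nat.factorial n : ℝ) ≠ 0 := by positivity
  rw [poch_one, uu]
  field_simp

lemma hyp2_nonneg (h0 : 0 ≤ d) (h1 : d < 4/5) {x : ℝ} (hx : x ∈ Set.Ioo (0:ℝ) 1) :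
    0 ≤ hyp2F1 1 d (2 - d) x :=
  (hyp2_hasSum h0 h1 hx).nonneg fun n =>
    mul_nonneg (uu_nonneg h0 (by linarith) n) (pow_nonneg hx.1.le n)

lemma M_pos (h0 : 0 ≤ d) (h1 : d < 4/5) {c : ℝ} (hc : 0 < c) : 0 < SS d (2 - d) c := by
  refine ((adm2 h0 h1).summable hc).tsum_pos (fun n => ?_) 0 ?_
  · have := uu_nonneg h0 (by linarith : 0 < 2 - d) n
    positivity
  · simp [uu_zero, hc]

lemma M_int (h0 : 0 ≤ d) (h1 : d < 4/5) {c : ℝ} (hc : 0 < c) (n : ℕ) :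
    IntegrableOn (fun x : ℝ => x ^ n * (x ^ (c - 1) * hyp2F1 1 d (2 - d) x)) (Set.Ioo (0:ℝ) 1) ∧
    ∫ x in Set.Ioo (0:ℝ) 1, x ^ n * (x ^ (c - 1) * hyp2F1 1 d (2 - d) x) = SS d (2 - d) (n + c) := by
  have hc' : 0 < n + c := by positivity
  have e : ∫ x in Set.Ioo (0:ℝ) 1, x ^ n * (x ^ (c - 1) * hyp2F1 1 d (2 - d) x) =
      SS d (2 - d) (n + c) := by
    have := termwise (uu_nonneg h0 (by linarith : 0 < 2 - d)) (fun x hx => Real.rpow_nonneg hx.1.le _)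
      (fun k => (int_pow hc' k).1) (fun k => (int_pow hc' k).2)
      (((adm2 h0 h1).summable hc').congr fun n => by ring) (fun x hx => hyp2_hasSum h0 h1 hx)
    rw [SS]
    refine Eq.trans ?_ (this.trans (tsum_congr fun n => by ring))
    refine setIntegral_congr_fun measurableSet_Ioo fun x hx => ?_
    beta_reduce
    rw [add_sub_assoc, Real.rpow_add hx.1, Real.rpow_natCast]
    ring
  refine ⟨?_, e⟩
  by_contra hh
  have := integral_undef hh
  rw [e] at this
  exact (M_pos h0 h1 hc').ne' this

lemma inner_hasSum (h0 : 0 ≤ d) (h1 : d < 4/5) {x : ℝ} (hx : x ∈ Set.Ioo (0:ℝ) 1) :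
    HasSum (fun n => qq d n * x ^ n)
      (∫ y in Set.Ioo (0:ℝ) 1, (1 - x * y) ^ (-d) * (y ^ (2 - d - 1) * hyp2F1 1 d (2 - d) y)) := by
  have hs : Summable fun n => qq d n * x ^ n := by
    refine Summable.of_nonneg_of_le (fun n => ?_) (fun n => ?_)
      ((summable_geometric_of_lt_one hx.1.le hx.2).mul_left (SS d (2 - d) (2 - d)))
    · exact mul_nonneg (qq_nonneg h0 h1 n) (pow_nonneg hx.1.le n)
    · refine mul_le_mul_of_nonneg_right ((qq_le h0 h1 n).trans ?_) (pow_nonneg hx.1.le n)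
      exact mul_le_of_le_one_left (M_pos h0 h1 (by linarith)).le
        (uu_le_one h0 one_pos (by linarith) n)
  have := termwise (a := fun n => uu d 1 n * x ^ n) (G := fun y => (1 - x * y) ^ (-d))
    (fun n => mul_nonneg (uu_nonneg h0 one_pos n) (pow_nonneg hx.1.le n))
    (fun y hy => mul_nonneg (Real.rpow_nonneg hy.1.le _) (hyp2_nonneg h0 h1 hy))
    (fun n => (M_int h0 h1 (by linarith : 0 < 2 - d) n).1)
    (fun n => (M_int h0 h1 (by linarith : 0 < 2 - d) n).2)
    (hs.congr fun n => by rw [qq]; ring) (fun y hy => by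
      have h2 : x * y < 1 := by nlinarith [hx.1, hx.2, hy.1, hy.2]
      refine (binom_hasSum (d := d) (mul_nonneg hx.1.le hy.1.le) h2).congr_fun fun n => ?_
      beta_reduce
      rw [mul_pow]; ring)
  rw [this]
  convert hs.hasSum using 1
  exact tsum_congr fun n => by rw [qq]; ring

lemma integral_eq (h0 : 0 ≤ d) (h1 : d < 4/5) :
    (∫ x in (0:ℝ)..1, ∫ y in (0:ℝ)..1,
      x ^ (3 - 3 * d) * y ^ (1 - d) * (1 - x * y) ^ (-d) *
        hyp2F1 1 d (2 - d) x * hyp2F1 1 d (2 - d) y) = ∑' n, TT d n := by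
  have := termwise (a := qq d) (qq_nonneg h0 h1)
    (fun y hy => mul_nonneg (Real.rpow_nonneg hy.1.le _) (hyp2_nonneg h0 h1 hy))
    (fun n => (M_int h0 h1 (by linarith : 0 < 4 - 3 * d) n).1)
    (fun n => (M_int h0 h1 (by linarith : 0 < 4 - 3 * d) n).2)
    ((TT_hasSum h0 h1).1.congr fun n => by rw [TT]; ring)
    (fun x hx => inner_hasSum h0 h1 hx)
  rw [intervalIntegral.integral_of_le zero_le_one, integral_Ioc_eq_integral_Ioo]
  refine Eq.trans ?_ (this.trans (tsum_congr fun n => by rw [TT]; ring))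
  refine setIntegral_congr_fun measurableSet_Ioo fun x hx => ?_
  beta_reduce
  rw [intervalIntegral.integral_of_le zero_le_one, integral_Ioc_eq_integral_Ioo,
    ← integral_mul_const]
  refine setIntegral_congr_fun measurableSet_Ioo fun y hy => ?_
  beta_reduce
  rw [show 4 - 3 * d - 1 = 3 - 3 * d by ring, show 2 - d - 1 = 1 - d by ring]
  ring

end I

section Fin
variable {d : ℝ}

lemma poch_ratio {c : ℝ} (hc : 0 < c) (k : ℕ) : poch c k / poch (c + 1) k = c / (k + c) := by
  have h1 := (poch_pos (by linarith : 0 < c + 1) k).ne'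
  have h2 : (k:ℝ) + c ≠ 0 := by positivity
  rw [div_eq_div_iff h1 h2]
  clear h1 h2
  induction k with
  | zero => simp [poch_zero]
  | succ k ih =>
    rw [poch_succ, poch_succ]
    push_cast
    linear_combination (c + k + 1) * ih

lemma hyp3_eq {p q c : ℝ} (hc : 0 < c) (hq : 0 < q) :
    hyp3F2 c 1 p (c + 1) q 1 = c * SS p q c := by
  rw [hyp3F2, SS, ← tsum_mul_left]
  refine tsum_congr fun k => ?_
  have := poch_ratio hc k
  have h3 : (Nat.factorial k : ℝ) ≠ 0 := by positivity
  rw [poch_one, one_pow, mul_one, uu]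
  calc _ = (poch c k / poch (c + 1) k) * (poch p k / poch q k) * (Nat.factorial k / Nat.factorial k) := by
        ring
    _ = _ := by rw [this, div_self h3]; ring

lemma K_shift (h0 : 0 ≤ d) (h1 : d < 4/5) {c : ℝ} (hc : 0 < c) (k : ℕ) :
    SS d 1 (k + c) = SS d 1 c * (poch c k / poch (c + (1 - d)) k) := by
  induction k with
  | zero => simp [poch_zero]
  | succ k ih =>
    have hk : (0:ℝ) < k + c := by positivity
    have h := (adm1 h0 h1).rec hk
    rw [ih] at h
    have h2 := (poch_pos (by linarith : 0 < c + (1 - d)) k).ne'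
    have hk0 : (0:ℝ) ≤ k := by positivity
    have h3 : c + (1 - d) + k ≠ 0 := by linarith
    rw [poch_succ, poch_succ]
    push_cast
    rw [show (k:ℝ) + 1 + c = k + c + 1 by ring]
    refine mul_left_cancel₀ h3 ?_
    rw [mul_div_mul_comm, mul_left_comm (c + (1 - d) + k), mul_left_comm (c + (1 - d) + k),
      mul_div_cancel₀ _ h3]
    linear_combination h

lemma hyp4_eq (h0 : 0 ≤ d) (h1 : d < 4/5) :
    SS d 1 (3 - 3 * d) * hyp4F3 1 d (2 - 2 * d) (3 - 3 * d) (2 - d) (3 - 2 * d) (4 - 4 * d) 1 =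
      (2 - 2 * d) * XX d := by
  rw [hyp4F3, XX, ← tsum_mul_left, ← tsum_mul_left]
  refine tsum_congr fun k => ?_
  have e := poch_ratio (by linarith : 0 < 2 - 2 * d) k
  rw [show 2 - 2 * d + 1 = 3 - 2 * d by ring] at e
  have h3 : (Nat.factorial k : ℝ) ≠ 0 := by positivity
  rw [K_shift h0 h1 (by linarith : 0 < 3 - 3 * d), show 3 - 3 * d + (1 - d) = 4 - 4 * d by ring,
    poch_one, one_pow, mul_one, uu]
  generalize SS d 1 (3 - 3 * d) = K
  calc _ = K * (poch (2 - 2 * d) k / poch (3 - 2 * d) k) * (poch d k / poch (2 - d) k)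
        * (poch (3 - 3 * d) k / poch (4 - 4 * d) k) * (Nat.factorial k / Nat.factorial k) := by
        ring
    _ = _ := by rw [e, div_self h3]; ring

end Fin

theorem double_integral_main (d : ℝ) (hd0 : 0 ≤ d) (hd1 : d < 4 / 5) :
    (∫ x in (0:ℝ)..1, ∫ y in (0:ℝ)..1,
      x ^ (3 - 3 * d) * y ^ (1 - d) * (1 - x * y) ^ (-d) *
        hyp2F1 1 d (2 - d) x * hyp2F1 1 d (2 - d) y)
    = Real.Gamma (1 - d) / (2 * (4 - 5 * d)) * (Real.Gamma (1 - d) / Real.Gamma (2 - 2 * d)) *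
        hyp3F2 (2 - 2 * d) 1 (2 * d - 1) (3 - 2 * d) (2 - d) 1
      - Real.Gamma (1 - d) / (2 * (4 - 5 * d)) *
          (Real.Gamma (3 - 3 * d) / Real.Gamma (4 - 4 * d)
            - Real.Gamma (1 - d) / Real.Gamma (2 - 2 * d)) *
          hyp3F2 (2 - 2 * d) 1 d (3 - 2 * d) (2 - d) 1
      - Real.Gamma (1 - d) / (2 * (4 - 5 * d)) *
          (Real.Gamma (3 - 3 * d) / Real.Gamma (4 - 4 * d)) *
          hyp4F3 1 d (2 - 2 * d) (3 - 3 * d) (2 - d) (3 - 2 * d) (4 - 4 * d) 1 := by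
  rw [integral_eq hd0 hd1]
  have h := TT_final hd0 hd1
  have e1 := hyp3_eq (p := 2 * d - 1) (q := 2 - d) (c := 2 - 2 * d) (by linarith) (by linarith)
  have e2 := hyp3_eq (p := d) (q := 2 - d) (c := 2 - 2 * d) (by linarith) (by linarith)
  have e3 := hyp4_eq hd0 hd1
  rw [show 2 - 2 * d + 1 = 3 - 2 * d by ring] at e1 e2
  have k1 := K_gamma hd0 hd1 (c := 1 - d) (by linarith)
  have k3 := K_gamma hd0 hd1 (c := 3 - 3 * d) (by linarith)
  rw [show 1 - d + (1 - d) = 2 - 2 * d by ring] at k1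
  rw [show 3 - 3 * d + (1 - d) = 4 - 4 * d by ring] at k3
  have h45 : 4 - 5 * d ≠ 0 := by linarith
  rw [e1, e2]
  refine mul_left_cancel₀ h45 ?_
  rw [h]
  have g1 : Real.Gamma (1 - d) * (Real.Gamma (1 - d) / Real.Gamma (2 - 2 * d)) =
      SS d 1 (1 - d) := by rw [k1]; ring
  have g3 : Real.Gamma (1 - d) * (Real.Gamma (3 - 3 * d) / Real.Gamma (4 - 4 * d)) =
      SS d 1 (3 - 3 * d) := by rw [k3]; ring
  have c1 : (4 - 5 * d) * (Real.Gamma (1 - d) / (2 * (4 - 5 * d))) = Real.Gamma (1 - d) / 2 := by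
    rw [← div_div]
    exact mul_div_cancel₀ _ h45
  generalize hyp4F3 1 d (2 - 2 * d) (3 - 3 * d) (2 - d) (3 - 2 * d) (4 - 4 * d) 1 = H4 at *
  generalize SS (2 * d - 1) (2 - d) (2 - 2 * d) = R at *
  generalize SS d (2 - d) (2 - 2 * d) = M at *
  generalize SS d 1 (1 - d) = K1 at *
  generalize SS d 1 (3 - 3 * d) = K3 at *
  generalize XX d = X at *
  generalize Real.Gamma (1 - d) / Real.Gamma (2 - 2 * d) = G1 at *
  generalize Real.Gamma (3 - 3 * d) / Real.Gamma (4 - 4 * d) = G3 at *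
  generalize Real.Gamma (1 - d) / (2 * (4 - 5 * d)) = C at *
  generalize Real.Gamma (1 - d) = G at *
  linear_combination -(G1 * (2 - 2 * d) * R - (G3 - G1) * (2 - 2 * d) * M - G3 * H4) * c1
    - ((1 - d) * (R + M)) * g1 + (1 - d) * M * g3 + H4 / 2 * g3 + e3 / 2
end

section
/- Let 0 ≤ d < 1 and let a, b be real numbers with a > -1, b > -1 and a ≠ b. Then ∫₀¹∫₀¹ x^{a} y^{b} (1-xy)^{-d} dx dy = [Γ(1-d)/(b-a)] · (Γ(a+1)/Γ(a+2-d) − Γ(b+1)/Γ(b+2-d)). -/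
open Real MeasureTheory

lemma bw_cast (u v x : ℝ) (hx : x ∈ Set.Icc (0:ℝ) 1) :
    (x : ℂ) ^ (((u + 1 : ℝ) : ℂ) - 1) * (1 - (x : ℂ)) ^ (((v + 1 : ℝ) : ℂ) - 1)
      = ((x ^ u * (1 - x) ^ v : ℝ) : ℂ) := by
  have h1 : (0:ℝ) ≤ 1 - x := by linarith [hx.2]
  rw [Complex.ofReal_mul, Complex.ofReal_cpow hx.1, Complex.ofReal_cpow h1]
  push_cast
  simp

lemma bw_int (u v : ℝ) (hu : -1 < u) (hv : -1 < v) :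
    IntervalIntegrable (fun x : ℝ => x ^ u * (1 - x) ^ v) volume 0 1 := by
  have h := Complex.betaIntegral_convergent (u := ((u + 1 : ℝ) : ℂ)) (v := ((v + 1 : ℝ) : ℂ))
    (by rw [Complex.ofReal_re]; linarith) (by rw [Complex.ofReal_re]; linarith)
  rw [intervalIntegrable_iff_integrableOn_Ioc_of_le zero_le_one] at h ⊢
  refine IntegrableOn.congr_fun (f := fun x : ℝ => Complex.re ((x : ℂ) ^ (((u + 1 : ℝ) : ℂ) - 1) *
    (1 - (x : ℂ)) ^ (((v + 1 : ℝ) : ℂ) - 1))) h.re ?_ measurableSet_Ioc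
  intro x hx
  simp only
  rw [bw_cast u v x ⟨hx.1.le, hx.2⟩, Complex.ofReal_re]

lemma bw_eval (u v : ℝ) (hu : -1 < u) (hv : -1 < v) :
    ∫ x in (0:ℝ)..1, x ^ u * (1 - x) ^ v
      = Real.Gamma (u + 1) * Real.Gamma (v + 1) / Real.Gamma (u + 1 + (v + 1)) := by
  have h := ProbabilityTheory.beta_eq_betaIntegralReal (u + 1) (v + 1) (by linarith) (by linarith)
  rw [ProbabilityTheory.beta] at h
  rw [h, Complex.betaIntegral]
  have : ∫ x in (0:ℝ)..1, (x : ℂ) ^ (((u + 1 : ℝ) : ℂ) - 1) *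
      (1 - (x : ℂ)) ^ (((v + 1 : ℝ) : ℂ) - 1)
      = ∫ x in (0:ℝ)..1, ((x ^ u * (1 - x) ^ v : ℝ) : ℂ) := by
    apply intervalIntegral.integral_congr
    intro x hx
    rw [Set.uIcc_of_le zero_le_one] at hx
    exact bw_cast u v x hx
  rw [this, intervalIntegral.integral_ofReal, Complex.ofReal_re]

lemma bw_bound (b d : ℝ) (hd0 : 0 ≤ d) (hd1 : d < 1) (hb : -1 < b) (x : ℝ)
    (hx : x ∈ Set.Ioc (0:ℝ) 1) :
    ‖∫ t in (0:ℝ)..x, t ^ b * (1 - t) ^ (-d)‖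
      ≤ x ^ (b + 1) * ∫ t in (0:ℝ)..1, t ^ b * (1 - t) ^ (-d) := by
  have hx0 := hx.1
  have h := intervalIntegral.mul_integral_comp_mul_left (a := 0) (b := 1) (c := x)
    (f := fun t : ℝ => t ^ b * (1 - t) ^ (-d))
  simp only [mul_zero, mul_one] at h
  rw [← h, norm_mul, Real.norm_of_nonneg hx0.le, Real.rpow_add hx0, Real.rpow_one,
    mul_comm (x ^ b), mul_assoc, ← intervalIntegral.integral_const_mul]
  refine mul_le_mul_of_nonneg_left ?_ hx0.le
  refine intervalIntegral.norm_integral_le_of_norm_le zero_le_one ?_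
    ((bw_int b (-d) hb (by linarith)).const_mul _)
  have h1 : ∀ᵐ t : ℝ, t ≠ 1 := by simp [ae_iff]
  filter_upwards [h1] with t ht ht'
  have ht1 : t < 1 := lt_of_le_of_ne ht'.2 ht
  have ht0 := ht'.1
  have hxt : x * t ≤ t := by nlinarith [hx.2]
  have hp : 0 < 1 - t := by linarith
  have hp' : 0 < 1 - x * t := by linarith
  rw [Real.norm_of_nonneg (by positivity), Real.mul_rpow hx0.le ht0.le, mul_assoc]
  gcongr x ^ b * (t ^ b * ?_)
  exact Real.rpow_le_rpow_of_nonpos hp (by linarith) (by linarith)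

lemma bw_inner (a b d x : ℝ) (hx : 0 < x) :
    ∫ y in (0:ℝ)..1, x ^ a * y ^ b * (1 - x * y) ^ (-d)
      = x ^ (a - b - 1) * ∫ t in (0:ℝ)..x, t ^ b * (1 - t) ^ (-d) := by
  have h := intervalIntegral.mul_integral_comp_mul_left (a := 0) (b := 1) (c := x)
    (f := fun t : ℝ => t ^ b * (1 - t) ^ (-d))
  simp only [mul_zero, mul_one] at h
  rw [← h, ← mul_assoc, ← intervalIntegral.integral_const_mul]
  apply intervalIntegral.integral_congr
  intro y hy
  rw [Set.uIcc_of_le zero_le_one] at hy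
  simp only
  have : x ^ a = x ^ (a - b - 1) * x * x ^ b := by
    rw [← Real.rpow_add_one hx.ne', ← Real.rpow_add hx]; congr 1; ring
  rw [Real.mul_rpow hx.le hy.1, this]; ring

theorem double_integral_power_weights (d a b : ℝ) (hd0 : 0 ≤ d) (hd1 : d < 1)
    (ha : -1 < a) (hb : -1 < b) (hab : a ≠ b) :
    (∫ x in (0:ℝ)..1, ∫ y in (0:ℝ)..1, x ^ a * y ^ b * (1 - x * y) ^ (-d))
    = Real.Gamma (1 - d) / (b - a) *
        (Real.Gamma (a + 1) / Real.Gamma (a + 2 - d)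
          - Real.Gamma (b + 1) / Real.Gamma (b + 2 - d)) := by
  have hba : a - b ≠ 0 := sub_ne_zero.2 hab
  have hd : -1 < -d := by linarith
  set f : ℝ → ℝ := fun t => t ^ b * (1 - t) ^ (-d) with hf
  set F : ℝ → ℝ := fun x => ∫ t in (0:ℝ)..x, f t with hF
  have hfint : IntervalIntegrable f volume 0 1 := bw_int b (-d) hb hd
  have hFc : ContinuousOn F (Set.Icc 0 1) := by
    have := intervalIntegral.continuousOn_primitive_interval' hfint
      (Set.left_mem_uIcc)
    rwa [Set.uIcc_of_le zero_le_one] at this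
  have hbd : ∀ x ∈ Set.Ioc (0:ℝ) 1, ‖F x‖ ≤ x ^ (b + 1) * F 1 := fun x hx =>
    bw_bound b d hd0 hd1 hb x hx
  have e1 : (∫ x in (0:ℝ)..1, ∫ y in (0:ℝ)..1, x ^ a * y ^ b * (1 - x * y) ^ (-d))
      = ∫ x in (0:ℝ)..1, x ^ (a - b - 1) * F x := by
    rw [intervalIntegral.integral_of_le zero_le_one, intervalIntegral.integral_of_le zero_le_one]
    apply setIntegral_congr_fun measurableSet_Ioc
    intro x hx
    exact bw_inner a b d x hx.1
  have hG : IntervalIntegrable (fun x : ℝ => x ^ (a - b - 1) * F x) volume 0 1 := by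
    have hg : IntervalIntegrable (fun x : ℝ => x ^ a * F 1) volume 0 1 :=
      (intervalIntegral.intervalIntegrable_rpow' ha).mul_const _
    rw [intervalIntegrable_iff_integrableOn_Ioc_of_le zero_le_one] at hg ⊢
    refine Integrable.mono' hg ?_ ?_
    · refine AEStronglyMeasurable.mul ?_ ?_
      · exact (by fun_prop : Measurable fun x : ℝ => x ^ (a - b - 1)).aestronglyMeasurable
      · exact (hFc.mono Set.Ioc_subset_Icc_self).aestronglyMeasurable measurableSet_Ioc
    · refine (ae_restrict_iff' measurableSet_Ioc).2 (Filter.Eventually.of_forall ?_)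
      intro x hx
      have hx0 := hx.1
      rw [norm_mul, Real.norm_of_nonneg (by positivity)]
      calc x ^ (a - b - 1) * ‖F x‖ ≤ x ^ (a - b - 1) * (x ^ (b + 1) * F 1) := by
            gcongr; exact hbd x hx
        _ = x ^ a * F 1 := by
            rw [← mul_assoc, ← Real.rpow_add hx0]; congr 2; ring
  have hB : IntervalIntegrable (fun x : ℝ => x ^ a * (1 - x) ^ (-d)) volume 0 1 :=
    bw_int a (-d) ha hd
  have key := intervalIntegral.integral_eq_sub_of_hasDerivAt_of_tendsto
    (f := fun x => x ^ (a - b) * F x)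
    (f' := fun x => (a - b) * (x ^ (a - b - 1) * F x) + x ^ a * (1 - x) ^ (-d))
    (fa := 0) (fb := F 1) (zero_lt_one' ℝ) ?_ ((hG.const_mul _).add hB) ?_ ?_
  · rw [intervalIntegral.integral_add (hG.const_mul _) hB, intervalIntegral.integral_const_mul,
      bw_eval a (-d) ha hd] at key
    have hF1 : F 1 = _ := bw_eval b (-d) hb hd
    rw [hF1] at key
    rw [e1]
    have r1 : a + 1 + (-d + 1) = a + 2 - d := by ring
    have r2 : b + 1 + (-d + 1) = b + 2 - d := by ring
    have r3 : -d + 1 = 1 - d := by ring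
    rw [r1, r2, r3] at key
    have hba' : b - a ≠ 0 := sub_ne_zero.2 hab.symm
    rw [div_mul_eq_mul_div, eq_div_iff hba']
    linear_combination -key
  · intro x hx
    have hx0 := hx.1
    have h1x : 0 < 1 - x := by linarith [hx.2]
    have hfc : ContinuousAt f x := by
      apply ContinuousAt.mul
      · exact Real.continuousAt_rpow_const _ _ (Or.inl hx0.ne')
      · exact ContinuousAt.rpow_const (by fun_prop) (Or.inl h1x.ne')
    have hfm : Measurable f := by rw [hf]; fun_prop
    have hFd : HasDerivAt F (f x) x := by
      refine intervalIntegral.integral_hasDerivAt_right (hfint.mono_set ?_)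
        hfm.stronglyMeasurable.stronglyMeasurableAtFilter hfc
      rw [Set.uIcc_of_le zero_le_one, Set.uIcc_of_le hx0.le]
      exact Set.Icc_subset_Icc_right hx.2.le
    have := (Real.hasDerivAt_rpow_const (p := a - b) (Or.inl hx0.ne')).mul hFd
    refine this.congr_deriv ?_
    have e : x ^ (a - b) * f x = x ^ a * (1 - x) ^ (-d) := by
      rw [hf]; simp only
      rw [← mul_assoc, ← Real.rpow_add hx0]; congr 2; ring
    rw [e]; ring
  · have hlim : Filter.Tendsto (fun x : ℝ => x ^ (a + 1) * F 1) (nhdsWithin 0 (Set.Ioi 0))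
        (nhds 0) := by
      have : ContinuousAt (fun x : ℝ => x ^ (a + 1) * F 1) 0 :=
        (Real.continuousAt_rpow_const _ _ (Or.inr (by linarith))).mul continuousAt_const
      have h2 := this.tendsto
      simp only [Real.zero_rpow (by linarith : a + 1 ≠ 0), zero_mul] at h2
      exact h2.mono_left nhdsWithin_le_nhds
    refine squeeze_zero_norm' ?_ hlim
    filter_upwards [Ioc_mem_nhdsGT (zero_lt_one' ℝ)] with x hx
    have hx0 := hx.1
    rw [norm_mul, Real.norm_of_nonneg (by positivity)]
    calc x ^ (a - b) * ‖F x‖ ≤ x ^ (a - b) * (x ^ (b + 1) * F 1) := by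
          gcongr; exact hbd x hx
      _ = x ^ (a + 1) * F 1 := by
          rw [← mul_assoc, ← Real.rpow_add hx0]; congr 2; ring
  · have h1 : Filter.Tendsto F (nhdsWithin 1 (Set.Iio 1)) (nhds (F 1)) := by
      have := hFc 1 (by simp)
      refine this.mono_left ?_
      rw [← nhdsWithin_Ioo_eq_nhdsLT (zero_lt_one' ℝ)]
      exact nhdsWithin_mono _ Set.Ioo_subset_Icc_self
    have h2 : Filter.Tendsto (fun x : ℝ => x ^ (a - b)) (nhdsWithin 1 (Set.Iio 1)) (nhds 1) := by
      have := (Real.continuousAt_rpow_const 1 (a - b) (Or.inl one_ne_zero)).tendsto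
      rw [Real.one_rpow] at this
      exact this.mono_left nhdsWithin_le_nhds
    simpa using h2.mul h1
end
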